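/- Fix an integer d ≥ 2, a unit vector ψ ∈ ℂ^d, and η ∈ [0,1], and set ρ := η|ψ⟩⟨ψ| + ((1−η)/d)·1_d. There exists a single-call deterministic superchannel S satisfying S ⋆ U = Uᵀ ρ U̅ for every U ∈ SU(d) (deterministic and exact unitary transposition on the known mixed state ρ) if and only if η ≤ d/(d²−1). -/

import Mathlib

open Matrix Kronecker BigOperators ComplexOrder

noncomputable section

/-- Entrywise complex conjugate `U̅` of a matrix. -/
def mconj {d : ℕ} (U : Matrix (Fin d) (Fin d) ℂ) : Matrix (Fin d) (Fin d) ℂ :=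
  U.map (starRingEnd ℂ)

/-- Rank-one outer product `|v⟩⟨v|`. -/
def outer {n : Type*} (v : n → ℂ) : Matrix n n ℂ :=
  Matrix.vecMulVec v (star v)

/-- Choi vector `|U⟩⟩ = Σ_i e_i ⊗ U e_i`. -/
def choiVec {d : ℕ} (U : Matrix (Fin d) (Fin d) ℂ) : Fin d × Fin d → ℂ :=
  fun p => U p.2 p.1

/-- `|U⟩⟩⟨⟨U|`. -/
def choiProj {d : ℕ} (U : Matrix (Fin d) (Fin d) ℂ) :
    Matrix (Fin d × Fin d) (Fin d × Fin d) ℂ :=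
  outer (choiVec U)

/-- Partial trace over the first tensor factor. -/
def ptrLeft {α β : Type*} [Fintype α] (S : Matrix (α × β) (α × β) ℂ) :
    Matrix β β ℂ :=
  fun b b' => ∑ a, S (a, b) (a, b')

/-- Partial trace over the second (last) tensor factor. -/
def ptrRight {α β : Type*} [Fintype β] (S : Matrix (α × β) (α × β) ℂ) :
    Matrix α α ℂ :=
  fun a a' => ∑ b, S (a, b) (a', b)

/-- Action `S ⋆ U := Tr_{IO}[ S · (|U̅⟩⟩⟨⟨U̅|_{IO} ⊗ 1_F) ]` of a single-call
supermap `S` on `I ⊗ O ⊗ F` applied to the unitary channel given by `U`. -/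
def act {d dF : ℕ}
    (S : Matrix ((Fin d × Fin d) × Fin dF) ((Fin d × Fin d) × Fin dF) ℂ)
    (U : Matrix (Fin d) (Fin d) ℂ) : Matrix (Fin dF) (Fin dF) ℂ :=
  ptrLeft (S * (choiProj (mconj U) ⊗ₖ (1 : Matrix (Fin dF) (Fin dF) ℂ)))

/-- A single-call deterministic superchannel (channels-to-states):
`S ≥ 0` with `Tr_F(S) = σ ⊗ 1_d`, `σ ≥ 0`, `Tr σ = 1`. -/
def IsSuperchannel {d dF : ℕ}
    (S : Matrix ((Fin d × Fin d) × Fin dF) ((Fin d × Fin d) × Fin dF) ℂ) : Prop :=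
  S.PosSemidef ∧
    ∃ σ : Matrix (Fin d) (Fin d) ℂ, σ.PosSemidef ∧ σ.trace = 1 ∧
      ptrRight S = σ ⊗ₖ (1 : Matrix (Fin d) (Fin d) ℂ)

/-!
If `S` transposes on `ρ`, put `T = S - |1⟩⟩⟨⟨1|_{IF} ⊗ ρ_O`, so that `T ⋆ U = 0` for every unitary
`U`. Each matrix entry of `T ⋆ U` is a sesquilinear form `Φ(U, U)`, and changing `U` by phases and
reflections shows that `Φ` vanishes on pairs of rank-one matrices whose ranges and whose supports
are orthogonal. Consequently `⟨u|T|u⟩_O - ⟨v|T|v⟩_O = 1_I ⊗ κ` for orthonormal `u` and `v`, that is,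
with `R_w = ⟨w|S|w⟩_O` and `δ = ⟨u|ρ|u⟩ - ⟨v|ρ|v⟩`,
`R_u - R_v = δ |1⟩⟩⟨⟨1| + 1 ⊗ κ`.
Both `R_u` and `R_v` are states, so taking traces gives `tr κ = -δ`, and taking expectations in
`|1⟩⟩` gives `δ (d² - 1) = ⟨⟨1|R_u|1⟩⟩ - ⟨⟨1|R_v|1⟩⟩ ≤ d`. For eigenvectors `u` and `v` this bounds
the spread of the spectrum of `ρ`. Conversely, adding to `|1⟩⟩⟨⟨1| ⊗ ρ` a supermap whose
output vanishes on all unitaries produces a superchannel as soon as that bound holds.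
-/

section SesquilinearForm

variable {A : Type*} [Ring A] [StarRing A] [Algebra ℂ A] [StarModule ℂ A] {p q V : A}

theorem smul_add_one_sub_mem_unitary (hp : IsStarProjection p) {w : ℂ} (hw : w ∈ unitary ℂ) :
    w • p + (1 - p) ∈ unitary A := by
  rw [Unitary.mem_iff] at hw ⊢
  simp only [star_add, star_smul, star_sub, star_one, hp.isSelfAdjoint.star_eq, add_mul, mul_add,
    smul_mul_assoc, mul_smul_comm, smul_smul, hp.isIdempotentElem.eq, hp.mul_one_sub_self,
    hp.one_sub_mul_self, hp.one_sub.isIdempotentElem.eq, hw.1, hw.2, one_smul, smul_zero, add_zero,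
    zero_add, add_sub_cancel, and_self]

variable {Φ : A →ₗ⋆[ℂ] A →ₗ[ℂ] ℂ}

theorem sesq_mul_mul_one_sub_eq_zero (hΦ : ∀ U ∈ unitary A, Φ U U = 0) (hV : V ∈ unitary A)
    (hp : IsStarProjection p) : Φ (V * p) (V * (1 - p)) = 0 := by
  have phase (w : ℂ) (hw : w ∈ unitary ℂ) :
      Φ (V * p) (V * p) + Φ (V * (1 - p)) (V * (1 - p)) + star w * Φ (V * p) (V * (1 - p))
        + w * Φ (V * (1 - p)) (V * p) = 0 := by
    have hU := hΦ _ (mul_mem hV (smul_add_one_sub_mem_unitary hp hw))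
    rw [mul_add V, mul_smul_comm] at hU
    simp only [map_add, LinearMap.add_apply, map_smulₛₗ, LinearMap.smul_apply, smul_eq_mul,
      RingHom.id_apply, starRingEnd_apply] at hU
    linear_combination hU - Φ (V * p) (V * p) * Unitary.star_mul_self_of_mem hw
  have h₁ := phase 1 (one_mem _)
  have h₂ := phase (-1) (by simp [Unitary.mem_iff])
  have h₃ := phase Complex.I (by simp [Unitary.mem_iff])
  simp only [star_one, star_neg, Complex.star_def, Complex.conj_I] at h₁ h₂ h₃
  linear_combination (1 / 4 - Complex.I / 4) * h₁ - (1 / 4 + Complex.I / 4) * h₂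
    + Complex.I / 2 * h₃
    + (Φ (V * p) (V * (1 - p)) - Φ (V * (1 - p)) (V * p)) / 2 * Complex.I_mul_I

theorem sesq_mul_mul_eq_zero (hΦ : ∀ U ∈ unitary A, Φ U U = 0) (hV : V ∈ unitary A)
    (hp : IsStarProjection p) (hq : IsStarProjection q) (hpq : p * q = 0) :
    Φ (V * p) (V * q) = 0 := by
  have hqp : q * p = 0 := by
    simpa [hp.isSelfAdjoint.star_eq, hq.isSelfAdjoint.star_eq] using congr(star $hpq)
  set R : A := (-1 : ℂ) • q + (1 - q) with hR
  have hRmem : R ∈ unitary A := smul_add_one_sub_mem_unitary hq (by simp [Unitary.mem_iff])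
  have hRp : R * p = p := by simp [hR, add_mul, sub_mul, hqp]
  have hR1p : R * (1 - p) = (1 - p) - (2 : ℂ) • q := by
    rw [mul_sub, hRp, hR, mul_one]
    module
  have h₁ := sesq_mul_mul_one_sub_eq_zero hΦ hV hp
  have h₂ := sesq_mul_mul_one_sub_eq_zero hΦ (mul_mem hV hRmem) hp
  rw [mul_assoc, mul_assoc, hRp, hR1p, mul_sub V, mul_smul_comm, map_sub, map_smul, h₁] at h₂
  simpa using h₂

end SesquilinearForm

section RankOne

variable {n : Type*} [Fintype n]

theorem isStarProjection_vecMulVec_star {v : n → ℂ} (hv : star v ⬝ᵥ v = 1) :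
    IsStarProjection (vecMulVec v (star v)) where
  isIdempotentElem := by
    rw [IsIdempotentElem, vecMulVec_mul_vecMulVec, hv, one_smul]
  isSelfAdjoint := by
    rw [IsSelfAdjoint, star_eq_conjTranspose, conjTranspose_vecMulVec, star_star]

open WithLp

theorem star_dotProduct_self_eq_norm_sq (v : n → ℂ) : star v ⬝ᵥ v = ‖toLp 2 v‖ ^ 2 := by
  rw [dotProduct_comm, ← EuclideanSpace.inner_toLp_toLp, inner_self_eq_norm_sq_to_K]
  rfl

theorem orthonormal_toLp_pair_iff {u v : n → ℂ} :
    Orthonormal ℂ ![toLp 2 u, toLp 2 v] ↔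
      star u ⬝ᵥ u = 1 ∧ star v ⬝ᵥ v = 1 ∧ star u ⬝ᵥ v = 0 := by
  have norm_eq_one_iff (w : n → ℂ) : ‖toLp 2 w‖ = 1 ↔ star w ⬝ᵥ w = 1 := by
    rw [star_dotProduct_self_eq_norm_sq]
    norm_cast
    exact (pow_eq_one_iff_of_nonneg (norm_nonneg (toLp 2 w)) two_ne_zero).symm
  simp [orthonormal_vecCons_iff, norm_eq_one_iff, EuclideanSpace.inner_toLp_toLp,
    dotProduct_comm v, and_comm]

theorem exists_smul_eq_of_ne_zero {v : n → ℂ} (hv : v ≠ 0) :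
    ∃ (c : ℂ) (w : n → ℂ), star w ⬝ᵥ w = 1 ∧ c • w = v := by
  have hv' : (‖toLp 2 v‖ : ℂ) ≠ 0 := by simpa
  refine ⟨‖toLp 2 v‖, (‖toLp 2 v‖⁻¹ : ℂ) • v, ?_, smul_inv_smul₀ hv' v⟩
  rw [star_smul, smul_dotProduct, dotProduct_smul, star_dotProduct_self_eq_norm_sq]
  simp [field]

theorem sesq_self_eq_of_forall_orthogonal {B : (n → ℂ) →ₗ⋆[ℂ] (n → ℂ) →ₗ[ℂ] ℂ}
    (hB : ∀ u v, star u ⬝ᵥ v = 0 → B u v = 0) {u v : n → ℂ} (huv : star u ⬝ᵥ v = 0)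
    (hnorm : star u ⬝ᵥ u = star v ⬝ᵥ v) : B u u = B v v := by
  have hvu : star v ⬝ᵥ u = 0 := by rw [star_dotProduct, huv, star_zero]
  have h := hB (u + v) (u - v) (by
    simp only [star_add, add_dotProduct, dotProduct_sub, huv, hvu, hnorm]; ring)
  simp only [map_add, map_sub, LinearMap.add_apply, hB u v huv, hB v u hvu] at h
  linear_combination h

variable [DecidableEq n]

theorem exists_mem_unitaryGroup_mulVec_eq {ι : Type*} {u v : ι → EuclideanSpace ℂ n}
    (hu : Orthonormal ℂ u) (hv : Orthonormal ℂ v) :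
    ∃ V ∈ Matrix.unitaryGroup n ℂ, ∀ i, V *ᵥ (u i).ofLp = (v i).ofLp := by
  let b := Module.Basis.span hu.linearIndependent
  have hbu (i : ι) : (b i : EuclideanSpace ℂ n) = u i :=
    congr_arg Subtype.val (Module.Basis.span_apply hu.linearIndependent i)
  have hb : Orthonormal ℂ b := by
    refine (Submodule.subtypeₗᵢ _).orthonormal_comp_iff.1 ?_
    simpa only [Function.comp_def, Submodule.coe_subtypeₗᵢ, Submodule.subtype_apply, hbu] using hu
  have hbv (i : ι) : b.constr ℂ v (b i) = v i := b.constr_basis ℂ v i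
  let f := ((b.constr ℂ v).isometryOfOrthonormal hb
    (by simpa only [Function.comp_def, hbv] using hv)).extend.toLinearIsometryEquiv rfl
  have hf (i : ι) : f (u i) = v i := by
    rw [← hbv, ← hbu]
    exact LinearIsometry.extend_apply _ (b i)
  let e := EuclideanSpace.basisFun n ℂ
  refine ⟨f.toMatrix e.toBasis e.toBasis, f.toMatrix_mem_unitaryGroup e e, fun i ↦ ?_⟩
  rw [← toLin'_apply, ← ofLp_toLpLin 2 2, ← hf i]
  exact congr_arg ofLp
    (LinearMap.congr_fun (Matrix.toLin_toMatrix e.toBasis e.toBasis f.toLinearMap) (u i))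

variable {Φ : Matrix n n ℂ →ₗ⋆[ℂ] Matrix n n ℂ →ₗ[ℂ] ℂ}

theorem sesq_vecMulVec_eq_zero_of_orthonormal
    (hΦ : ∀ U ∈ Matrix.unitaryGroup n ℂ, Φ U U = 0) {u v a b : n → ℂ}
    (huv : Orthonormal ℂ ![toLp 2 u, toLp 2 v]) (hab : Orthonormal ℂ ![toLp 2 a, toLp 2 b]) :
    Φ (vecMulVec u (star a)) (vecMulVec v (star b)) = 0 := by
  obtain ⟨V, hV, hVab⟩ := exists_mem_unitaryGroup_mulVec_eq hab huv
  have hVa : V *ᵥ a = u := hVab 0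
  have hVb : V *ᵥ b = v := hVab 1
  obtain ⟨ha, hb, hab⟩ := orthonormal_toLp_pair_iff.1 hab
  rw [← hVa, ← hVb, ← mul_vecMulVec, ← mul_vecMulVec]
  refine sesq_mul_mul_eq_zero hΦ hV (isStarProjection_vecMulVec_star ha)
    (isStarProjection_vecMulVec_star hb) ?_
  rw [vecMulVec_mul_vecMulVec, hab, zero_smul, vecMulVec_zero]

theorem sesq_vecMulVec_eq_zero (hΦ : ∀ U ∈ Matrix.unitaryGroup n ℂ, Φ U U = 0) {u v a b : n → ℂ}
    (huv : star u ⬝ᵥ v = 0) (hab : star a ⬝ᵥ b = 0) :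
    Φ (vecMulVec u a) (vecMulVec v b) = 0 := by
  obtain ⟨a, rfl⟩ := (star_involutive : Function.Involutive (star : (n → ℂ) → _)).surjective a
  obtain ⟨b, rfl⟩ := (star_involutive : Function.Involutive (star : (n → ℂ) → _)).surjective b
  rw [star_dotProduct_star, dotProduct_comm, star_eq_zero] at hab
  rcases eq_or_ne u 0 with rfl | hu
  · simp
  rcases eq_or_ne v 0 with rfl | hv
  · simp
  rcases eq_or_ne a 0 with rfl | ha
  · simp
  rcases eq_or_ne b 0 with rfl | hb
  · simp
  obtain ⟨cu, u, hu', rfl⟩ := exists_smul_eq_of_ne_zero hu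
  obtain ⟨cv, v, hv', rfl⟩ := exists_smul_eq_of_ne_zero hv
  obtain ⟨ca, a, ha', rfl⟩ := exists_smul_eq_of_ne_zero ha
  obtain ⟨cb, b, hb', rfl⟩ := exists_smul_eq_of_ne_zero hb
  have := sesq_vecMulVec_eq_zero_of_orthonormal hΦ
    (orthonormal_toLp_pair_iff.2 ⟨hu', hv', by simp_all⟩)
    (orthonormal_toLp_pair_iff.2 ⟨ha', hb', by simp_all⟩)
  simp [this, vecMulVec_smul, smul_vecMulVec]

theorem sesq_vecMulVec_eq_of_orthogonal (hΦ : ∀ U ∈ Matrix.unitaryGroup n ℂ, Φ U U = 0)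
    {u v a b : n → ℂ} (huv : star u ⬝ᵥ v = 0) (hnorm : star u ⬝ᵥ u = star v ⬝ᵥ v)
    (hab : star a ⬝ᵥ b = 0) :
    Φ (vecMulVec u a) (vecMulVec u b) = Φ (vecMulVec v a) (vecMulVec v b) :=
  sesq_self_eq_of_forall_orthogonal
    (B := (Φ.comp ((vecMulVecBilin ℂ ℂ).flip a)).compl₂ ((vecMulVecBilin ℂ ℂ).flip b))
    (fun _ _ h ↦ sesq_vecMulVec_eq_zero hΦ h hab) huv hnorm

theorem exists_sesq_vecMulVec_single_sub_eq (hΦ : ∀ U ∈ Matrix.unitaryGroup n ℂ, Φ U U = 0)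
    {u v : n → ℂ} (huv : star u ⬝ᵥ v = 0) (hnorm : star u ⬝ᵥ u = star v ⬝ᵥ v) :
    ∃ κ : ℂ, ∀ j l,
      Φ (vecMulVec u (Pi.single j 1)) (vecMulVec u (Pi.single l 1)) -
        Φ (vecMulVec v (Pi.single j 1)) (vecMulVec v (Pi.single l 1)) = if j = l then κ else 0 := by
  rcases isEmpty_or_nonempty n with _ | ⟨⟨i⟩⟩
  · exact ⟨0, isEmptyElim⟩
  have hsingle {j l : n} (hjl : j ≠ l) : star (Pi.single j 1) ⬝ᵥ Pi.single l (1 : ℂ) = 0 := by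
    simp [hjl]
  let B (w : n → ℂ) := (Φ.comp (vecMulVecBilin ℂ ℂ w)).compl₂ (vecMulVecBilin ℂ ℂ w)
  have hB (a b : n → ℂ) (hab : star a ⬝ᵥ b = 0) : (B u - B v) a b = 0 :=
    sub_eq_zero.2 (sesq_vecMulVec_eq_of_orthogonal hΦ huv hnorm hab)
  refine ⟨(B u - B v) (Pi.single i 1) (Pi.single i 1), fun j l ↦ ?_⟩
  split_ifs with hjl
  · subst hjl
    rcases eq_or_ne j i with rfl | hji
    · rfl
    · exact sesq_self_eq_of_forall_orthogonal hB (hsingle hji) (by simp)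
  · exact hB _ _ (hsingle hjl)

end RankOne

section Spectrum

variable {n : Type*} [Fintype n] {A : Matrix n n ℂ}

section

variable [DecidableEq n]

theorem posSemidef_smul_one_sub_iff (hA : A.IsHermitian) {c : ℝ} :
    ((c : ℂ) • 1 - A).PosSemidef ↔ ∀ s ∈ spectrum ℝ A, s ≤ c := by
  have hc : (c : ℂ) • (1 : Matrix n n ℂ) = algebraMap ℝ (Matrix n n ℂ) c := by
    rw [Algebra.algebraMap_eq_smul_one, Complex.coe_smul]
  open scoped MatrixOrder in
  rw [← le_algebraMap_iff_spectrum_le hA.isSelfAdjoint, Matrix.le_iff, hc]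

theorem posSemidef_sub_smul_one_iff (hA : A.IsHermitian) {c : ℝ} :
    (A - (c : ℂ) • 1).PosSemidef ↔ ∀ s ∈ spectrum ℝ A, c ≤ s := by
  have hc : (c : ℂ) • (1 : Matrix n n ℂ) = algebraMap ℝ (Matrix n n ℂ) c := by
    rw [Algebra.algebraMap_eq_smul_one, Complex.coe_smul]
  open scoped MatrixOrder in
  rw [← algebraMap_le_iff_le_spectrum hA.isSelfAdjoint, Matrix.le_iff, hc]

theorem posSemidef_trace_smul_one_sub (hA : A.PosSemidef) : (A.trace • 1 - A).PosSemidef := by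
  have htrace : A.trace = ((∑ i, hA.isHermitian.eigenvalues i : ℝ) : ℂ) := by
    simp [hA.isHermitian.trace_eq_sum_eigenvalues]
  rw [htrace, posSemidef_smul_one_sub_iff hA.isHermitian,
    hA.isHermitian.spectrum_real_eq_range_eigenvalues, Set.forall_mem_range]
  exact fun i ↦ Finset.single_le_sum (fun j _ ↦ hA.eigenvalues_nonneg j) (Finset.mem_univ i)

end

theorem star_dotProduct_mulVec_le_trace_mul (hA : A.PosSemidef) (x : n → ℂ) :
    star x ⬝ᵥ A *ᵥ x ≤ A.trace * (star x ⬝ᵥ x) := by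
  classical
  have := (posSemidef_trace_smul_one_sub hA).dotProduct_mulVec_nonneg x
  rwa [sub_mulVec, smul_mulVec, one_mulVec, dotProduct_sub, dotProduct_smul, smul_eq_mul,
    sub_nonneg] at this

end Spectrum

section Supermap

variable {α β γ : Type*}

theorem ptrRight_add [Fintype γ] (S T : Matrix (α × γ) (α × γ) ℂ) :
    ptrRight (S + T) = ptrRight S + ptrRight T := by
  ext
  simp [ptrRight, Finset.sum_add_distrib]

theorem ptrRight_kronecker [Fintype γ] (X : Matrix α α ℂ) (Y : Matrix γ γ ℂ) :
    ptrRight (X ⊗ₖ Y) = Y.trace • X := by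
  ext
  simp [ptrRight, trace, ← Finset.mul_sum, mul_comm]

theorem trace_ptrRight [Fintype α] [Fintype γ] (S : Matrix (α × γ) (α × γ) ℂ) :
    (ptrRight S).trace = S.trace := by
  simp [ptrRight, trace, Fintype.sum_prod_type]

/-- The compression `⟨u|_O S |u⟩_O` of an operator on `I ⊗ O ⊗ F` to an operator on `I ⊗ F`. -/
def contractOut [Fintype β] (S : Matrix ((α × β) × γ) ((α × β) × γ) ℂ) (u : β → ℂ) :
    Matrix (α × γ) (α × γ) ℂ :=
  fun p q ↦ star u ⬝ᵥ S.submatrix (fun k ↦ ((p.1, k), p.2)) (fun k ↦ ((q.1, k), q.2)) *ᵥ u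

/-- The operator on `I ⊗ O ⊗ F` acting as `J` on `I ⊗ F` and as `X` on `O`. -/
def insertOut (J : Matrix (α × γ) (α × γ) ℂ) (X : Matrix β β ℂ) :
    Matrix ((α × β) × γ) ((α × β) × γ) ℂ :=
  (J ⊗ₖ X).submatrix (fun p ↦ ((p.1.1, p.2), p.1.2)) (fun p ↦ ((p.1.1, p.2), p.1.2))

theorem contractOut_sub [Fintype β] (S T : Matrix ((α × β) × γ) ((α × β) × γ) ℂ) (u : β → ℂ) :
    contractOut (S - T) u = contractOut S u - contractOut T u := by
  ext
  simp [contractOut, submatrix_sub, sub_mulVec, dotProduct_sub]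

theorem contractOut_insertOut [Fintype β] (J : Matrix (α × γ) (α × γ) ℂ) (X : Matrix β β ℂ)
    (u : β → ℂ) : contractOut (insertOut J X) u = (star u ⬝ᵥ X *ᵥ u) • J := by
  ext p q
  have : (insertOut J X).submatrix (fun k ↦ ((p.1, k), p.2)) (fun k ↦ ((q.1, k), q.2)) =
      J p q • X := rfl
  rw [contractOut, this, smul_mulVec, dotProduct_smul, Matrix.smul_apply, smul_eq_mul, smul_eq_mul,
    mul_comm]

theorem ptrRight_contractOut [Fintype β] [DecidableEq β] [Fintype γ]
    {S : Matrix ((α × β) × γ) ((α × β) × γ) ℂ} {σ : Matrix α α ℂ}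
    (hS : ptrRight S = σ ⊗ₖ (1 : Matrix β β ℂ)) (u : β → ℂ) :
    ptrRight (contractOut S u) = (star u ⬝ᵥ u) • σ := by
  have hS' (a a' k m) : ∑ c, S ((a, k), c) ((a', m), c) = σ a a' * (1 : Matrix β β ℂ) k m :=
    congr_fun₂ hS (a, k) (a', m)
  ext a a'
  calc ptrRight (contractOut S u) a a'
      = star u ⬝ᵥ (∑ c, S.submatrix (fun k ↦ ((a, k), c)) (fun k ↦ ((a', k), c))) *ᵥ u := by
        rw [sum_mulVec, dotProduct_sum]; rfl
    _ = star u ⬝ᵥ (σ a a' • (1 : Matrix β β ℂ)) *ᵥ u := by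
        congr 2; ext k m; simp [Matrix.sum_apply, hS']
    _ = ((star u ⬝ᵥ u) • σ) a a' := by
        simp [smul_mulVec, mul_comm]

theorem posSemidef_contractOut [Finite α] [Fintype β] [Finite γ]
    {S : Matrix ((α × β) × γ) ((α × β) × γ) ℂ} (hS : S.PosSemidef) (u : β → ℂ) :
    (contractOut S u).PosSemidef := by
  classical
  cases nonempty_fintype α
  cases nonempty_fintype γ
  let W : Matrix ((α × β) × γ) (α × γ) ℂ :=
    of fun p q ↦ if p.1.1 = q.1 ∧ p.2 = q.2 then u p.1.2 else 0
  have hW : contractOut S u = Wᴴ * S * W := by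
    ext p q
    rw [Matrix.mul_assoc]
    simp [contractOut, W, Matrix.mul_apply, dotProduct, mulVec, Fintype.sum_prod_type, ite_and,
      apply_ite, Finset.mul_sum]
  exact hW ▸ hS.conjTranspose_mul_mul_same W

theorem posSemidef_insertOut [Finite α] [Finite β] [Finite γ]
    {J : Matrix (α × γ) (α × γ) ℂ} {X : Matrix β β ℂ} (hJ : J.PosSemidef) (hX : X.PosSemidef) :
    (insertOut J X).PosSemidef :=
  (hJ.kronecker hX).submatrix _

theorem ptrRight_insertOut [Fintype γ] (J : Matrix (α × γ) (α × γ) ℂ) (X : Matrix β β ℂ) :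
    ptrRight (insertOut J X) = ptrRight J ⊗ₖ X := by
  ext
  simp [ptrRight, insertOut, Finset.sum_mul]

variable {d dF : ℕ}

/-- The sesquilinear form `(X, Y) ↦ ⟨⟨X|M|Y⟩⟩` defined by a matrix on the space of Choi vectors. -/
def choiForm (M : Matrix (Fin d × Fin d) (Fin d × Fin d) ℂ) :
    Matrix (Fin d) (Fin d) ℂ →ₗ⋆[ℂ] Matrix (Fin d) (Fin d) ℂ →ₗ[ℂ] ℂ :=
  LinearMap.mk₂'ₛₗ (starRingEnd ℂ) (RingHom.id ℂ) (fun X Y ↦ star (choiVec X) ⬝ᵥ M *ᵥ choiVec Y)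
    (fun X X' Y ↦ by
      change star (choiVec X + choiVec X') ⬝ᵥ M *ᵥ choiVec Y = _
      rw [star_add, add_dotProduct])
    (fun c X Y ↦ by
      change star (c • choiVec X) ⬝ᵥ M *ᵥ choiVec Y = _
      rw [star_smul, smul_dotProduct, starRingEnd_apply])
    (fun X Y Y' ↦ by
      change star (choiVec X) ⬝ᵥ M *ᵥ (choiVec Y + choiVec Y') = _
      rw [mulVec_add, dotProduct_add])
    (fun c X Y ↦ by
      change star (choiVec X) ⬝ᵥ M *ᵥ (c • choiVec Y) = _
      rw [mulVec_smul, dotProduct_smul, RingHom.id_apply])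

theorem act_apply (S : Matrix ((Fin d × Fin d) × Fin dF) ((Fin d × Fin d) × Fin dF) ℂ)
    (U : Matrix (Fin d) (Fin d) ℂ) (b c : Fin dF) :
    act S U b c = choiForm (S.submatrix (·, b) (·, c)) (mconj U) (mconj U) := by
  simp [act, ptrLeft, choiForm, choiProj, outer, Matrix.mul_apply, dotProduct, mulVec, vecMulVec,
    Fintype.sum_prod_type, Matrix.one_apply, Finset.mul_sum, mul_comm, mul_left_comm, mul_assoc]

theorem choiForm_vecMulVec_single
    (S : Matrix ((Fin d × Fin d) × Fin dF) ((Fin d × Fin d) × Fin dF) ℂ)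
    (u : Fin d → ℂ) (p q : Fin d × Fin dF) :
    choiForm (S.submatrix (·, p.2) (·, q.2)) (vecMulVec u (Pi.single p.1 1))
      (vecMulVec u (Pi.single q.1 1)) = contractOut S u p q := by
  simp [contractOut, choiForm, choiVec, dotProduct, mulVec, vecMulVec,
    Fintype.sum_prod_type, Pi.single_apply, apply_ite, ite_mul, Finset.sum_ite_irrel]

theorem mconj_mem_unitaryGroup {U : Matrix (Fin d) (Fin d) ℂ} (hU : U ∈ unitaryGroup (Fin d) ℂ) :
    mconj U ∈ unitaryGroup (Fin d) ℂ :=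
  map_star_mem_unitaryGroup_iff.2 hU

theorem exists_contractOut_sub_eq_one_kronecker
    {T : Matrix ((Fin d × Fin d) × Fin dF) ((Fin d × Fin d) × Fin dF) ℂ}
    (hT : ∀ U ∈ unitaryGroup (Fin d) ℂ, act T U = 0) {u v : Fin d → ℂ} (huv : star u ⬝ᵥ v = 0)
    (hnorm : star u ⬝ᵥ u = star v ⬝ᵥ v) :
    ∃ κ : Matrix (Fin dF) (Fin dF) ℂ, contractOut T u - contractOut T v = 1 ⊗ₖ κ := by
  have hΦ (b c : Fin dF) (U : Matrix (Fin d) (Fin d) ℂ) (hU : U ∈ unitaryGroup (Fin d) ℂ) :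
      choiForm (T.submatrix (·, b) (·, c)) U U = 0 := by
    have hUU : mconj (mconj U) = U := by
      ext
      simp [mconj]
    rw [← hUU, ← act_apply, hT _ (mconj_mem_unitaryGroup hU), Matrix.zero_apply]
  choose κ hκ using fun b c ↦ exists_sesq_vecMulVec_single_sub_eq (hΦ b c) huv hnorm
  refine ⟨of κ, ?_⟩
  ext p q
  rw [Matrix.sub_apply, ← choiForm_vecMulVec_single, ← choiForm_vecMulVec_single, hκ]
  simp [one_apply]

end Supermap

section Superchannel

variable {d dF : ℕ}

theorem act_add (S T : Matrix ((Fin d × Fin d) × Fin dF) ((Fin d × Fin d) × Fin dF) ℂ)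
    (U : Matrix (Fin d) (Fin d) ℂ) : act (S + T) U = act S U + act T U := by
  ext
  simp [act, ptrLeft, add_mul, Finset.sum_add_distrib]

theorem act_sub (S T : Matrix ((Fin d × Fin d) × Fin dF) ((Fin d × Fin d) × Fin dF) ℂ)
    (U : Matrix (Fin d) (Fin d) ℂ) : act (S - T) U = act S U - act T U := by
  ext
  simp [act, ptrLeft, sub_mul]

theorem act_insertOut_apply (J : Matrix (Fin d × Fin dF) (Fin d × Fin dF) ℂ)
    (X U : Matrix (Fin d) (Fin d) ℂ) (b c : Fin dF) :
    act (insertOut J X) U b c = ∑ j, ∑ l, J (j, b) (l, c) * (Uᵀ * X * mconj U) j l := by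
  rw [act_apply]
  simp only [choiForm, LinearMap.mk₂'ₛₗ_apply, insertOut, choiVec, mconj, dotProduct, mulVec,
    Matrix.mul_apply, Fintype.sum_prod_type, submatrix_apply, kroneckerMap_apply, map_apply,
    transpose_apply, Pi.star_apply, starRingEnd_apply, star_star, Finset.mul_sum, Finset.sum_mul]
  refine Finset.sum_congr rfl fun j _ ↦ ?_
  rw [Finset.sum_comm]
  refine Finset.sum_congr rfl fun l _ ↦ ?_
  rw [Finset.sum_comm]
  refine Finset.sum_congr rfl fun m _ ↦ Finset.sum_congr rfl fun k _ ↦ ?_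
  ring

theorem act_insertOut_choiProj_one (X U : Matrix (Fin d) (Fin d) ℂ) :
    act (insertOut (choiProj 1) X) U = Uᵀ * X * mconj U := by
  ext b c
  rw [act_insertOut_apply]
  simp [choiProj, outer, vecMulVec_apply, choiVec, one_apply]

theorem mconj_mul_transpose_of_mem_unitaryGroup {U : Matrix (Fin d) (Fin d) ℂ}
    (hU : U ∈ unitaryGroup (Fin d) ℂ) : mconj U * Uᵀ = 1 :=
  mem_unitaryGroup_iff'.1 (transpose_mem_unitaryGroup_iff.2 hU)

theorem act_insertOut_one (X : Matrix (Fin d) (Fin d) ℂ) {U : Matrix (Fin d) (Fin d) ℂ}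
    (hU : U ∈ unitaryGroup (Fin d) ℂ) :
    act (insertOut (1 : Matrix (Fin d × Fin dF) (Fin d × Fin dF) ℂ) X) U = X.trace • 1 := by
  have htrace : (Uᵀ * X * mconj U).trace = X.trace := by
    rw [trace_mul_cycle, mconj_mul_transpose_of_mem_unitaryGroup hU, Matrix.one_mul]
  ext b c
  rw [act_insertOut_apply, ← htrace]
  by_cases hbc : b = c <;> simp [one_apply, trace, hbc]

theorem star_choiVec_one_dotProduct_choiVec_one :
    star (choiVec (1 : Matrix (Fin d) (Fin d) ℂ)) ⬝ᵥ choiVec 1 = d := by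
  simp [choiVec, dotProduct, Fintype.sum_prod_type, one_apply]

theorem choiProj_one_mulVec_choiVec_one :
    choiProj (1 : Matrix (Fin d) (Fin d) ℂ) *ᵥ choiVec 1 = (d : ℂ) • choiVec 1 := by
  rw [choiProj, outer, vecMulVec_mulVec, star_choiVec_one_dotProduct_choiVec_one, op_smul_eq_smul]

theorem trace_choiProj_one : (choiProj (1 : Matrix (Fin d) (Fin d) ℂ)).trace = d := by
  rw [choiProj, outer, trace_vecMulVec, dotProduct_comm, star_choiVec_one_dotProduct_choiVec_one]

theorem posSemidef_choiProj (U : Matrix (Fin d) (Fin d) ℂ) : (choiProj U).PosSemidef :=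
  posSemidef_vecMulVec_self_star _

theorem ptrRight_choiProj_one : ptrRight (choiProj (1 : Matrix (Fin d) (Fin d) ℂ)) = 1 := by
  ext
  simp [ptrRight, choiProj, outer, vecMulVec_apply, choiVec, one_apply, eq_comm]

theorem star_choiVec_one_dotProduct_one_kronecker_mulVec (κ : Matrix (Fin d) (Fin d) ℂ) :
    star (choiVec 1) ⬝ᵥ ((1 : Matrix (Fin d) (Fin d) ℂ) ⊗ₖ κ) *ᵥ choiVec 1 = κ.trace := by
  simp [choiVec, dotProduct, mulVec, Fintype.sum_prod_type, one_apply, trace]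

theorem act_smul_of_mem_unitary
    (S : Matrix ((Fin d × Fin d) × Fin dF) ((Fin d × Fin d) × Fin dF) ℂ)
    (U : Matrix (Fin d) (Fin d) ℂ) {c : ℂ} (hc : c ∈ unitary ℂ) : act S (c • U) = act S U := by
  have hcU : mconj (c • U) = star c • mconj U := by
    ext
    simp [mconj]
  ext
  rw [act_apply, act_apply, hcU, map_smul, map_smulₛₗ, LinearMap.smul_apply, smul_smul,
    starRingEnd_apply, star_star, Unitary.star_mul_self_of_mem hc, one_smul]

theorem exists_smul_mem_specialUnitaryGroup {n : Type*} [Fintype n] [DecidableEq n] [Nonempty n]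
    {U : Matrix n n ℂ} (hU : U ∈ unitaryGroup n ℂ) :
    ∃ c ∈ unitary ℂ, c • U ∈ specialUnitaryGroup n ℂ := by
  obtain ⟨c, hc⟩ := IsAlgClosed.exists_pow_nat_eq (star U.det) (Fintype.card_pos (α := n))
  have hdet := det_of_mem_unitary hU
  have hcmem : c ∈ unitary ℂ := by
    have hnorm : ‖c‖ = 1 := by
      rw [← pow_eq_one_iff_of_nonneg (norm_nonneg c) (Fintype.card_ne_zero (α := n)), ← norm_pow,
        hc, norm_star, CStarRing.norm_of_mem_unitary hdet]
    rw [Unitary.mem_iff_self_mul_star, Complex.star_def, Complex.mul_conj', hnorm]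
    simp
  refine ⟨c, hcmem, mem_specialUnitaryGroup_iff.2 ⟨?_, ?_⟩⟩
  · exact Unitary.smul_mem_of_mem hcmem hU
  · rw [det_smul, hc, Unitary.star_mul_self_of_mem hdet]

theorem act_eq_zero_of_forall_mem_specialUnitaryGroup [NeZero d]
    {T : Matrix ((Fin d × Fin d) × Fin dF) ((Fin d × Fin d) × Fin dF) ℂ}
    (hT : ∀ U ∈ specialUnitaryGroup (Fin d) ℂ, act T U = 0) {U : Matrix (Fin d) (Fin d) ℂ}
    (hU : U ∈ unitaryGroup (Fin d) ℂ) : act T U = 0 := by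
  obtain ⟨c, hc, hcU⟩ := exists_smul_mem_specialUnitaryGroup hU
  rw [← act_smul_of_mem_unitary T U hc, hT _ hcU]

end Superchannel

section Transposition

variable {d : ℕ} {ρ : Matrix (Fin d) (Fin d) ℂ}
  {S : Matrix ((Fin d × Fin d) × Fin d) ((Fin d × Fin d) × Fin d) ℂ}

theorem trace_contractOut_eq_one {dF : ℕ}
    {S : Matrix ((Fin d × Fin d) × Fin dF) ((Fin d × Fin d) × Fin dF) ℂ} (hS : IsSuperchannel S)
    {u : Fin d → ℂ} (hu : star u ⬝ᵥ u = 1) : (contractOut S u).trace = 1 := by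
  obtain ⟨-, σ, -, htrace, hσ⟩ := hS
  rw [← trace_ptrRight, ptrRight_contractOut hσ, hu, one_smul, htrace]

theorem star_dotProduct_mulVec_sub_mul_le (hS : IsSuperchannel S)
    (hact : ∀ U ∈ unitaryGroup (Fin d) ℂ, act S U = Uᵀ * ρ * mconj U) {u v : Fin d → ℂ}
    (hu : star u ⬝ᵥ u = 1) (hv : star v ⬝ᵥ v = 1) (huv : star u ⬝ᵥ v = 0) :
    (star u ⬝ᵥ ρ *ᵥ u - star v ⬝ᵥ ρ *ᵥ v) * (d ^ 2 - 1) ≤ d := by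
  have hd : (d : ℂ) ≠ 0 := by
    rw [Nat.cast_ne_zero]
    rintro rfl
    simp at hu
  set δ := star u ⬝ᵥ ρ *ᵥ u - star v ⬝ᵥ ρ *ᵥ v
  set Ω : Fin d × Fin d → ℂ := choiVec 1
  have hT (U) (hU : U ∈ unitaryGroup (Fin d) ℂ) : act (S - insertOut (choiProj 1) ρ) U = 0 := by
    rw [act_sub, act_insertOut_choiProj_one, hact U hU, sub_self]
  obtain ⟨κ, hκ⟩ := exists_contractOut_sub_eq_one_kronecker hT huv (hu.trans hv.symm)
  have hR : contractOut S u - contractOut S v = δ • choiProj 1 + 1 ⊗ₖ κ := by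
    rw [← hκ]
    simp only [contractOut_sub, contractOut_insertOut, δ]
    module
  have htrace : δ + κ.trace = 0 := by
    have := congr(trace $hR)
    rw [trace_sub, trace_contractOut_eq_one hS hu, trace_contractOut_eq_one hS hv, trace_add,
      trace_smul, trace_choiProj_one, trace_kronecker, trace_one, Fintype.card_fin] at this
    refine mul_left_cancel₀ hd ?_
    linear_combination -this
  have hΩ : star Ω ⬝ᵥ contractOut S u *ᵥ Ω - star Ω ⬝ᵥ contractOut S v *ᵥ Ω = δ * (d ^ 2 - 1) := by
    rw [← dotProduct_sub, ← sub_mulVec, hR, add_mulVec, smul_mulVec,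
      choiProj_one_mulVec_choiVec_one, dotProduct_add, dotProduct_smul, dotProduct_smul,
      star_choiVec_one_dotProduct_choiVec_one, star_choiVec_one_dotProduct_one_kronecker_mulVec]
    simp only [smul_eq_mul]
    linear_combination htrace
  calc δ * (d ^ 2 - 1)
      ≤ star Ω ⬝ᵥ contractOut S u *ᵥ Ω := by
        rw [← hΩ, sub_le_self_iff]
        exact (posSemidef_contractOut hS.1 v).dotProduct_mulVec_nonneg Ω
    _ ≤ (contractOut S u).trace * (star Ω ⬝ᵥ Ω) :=
        star_dotProduct_mulVec_le_trace_mul (posSemidef_contractOut hS.1 u) Ω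
    _ = d := by
        rw [trace_contractOut_eq_one hS hu, one_mul, star_choiVec_one_dotProduct_choiVec_one]

theorem sub_mul_le_of_mem_spectrum (hρ : ρ.IsHermitian) (hS : IsSuperchannel S)
    (hact : ∀ U ∈ unitaryGroup (Fin d) ℂ, act S U = Uᵀ * ρ * mconj U) {s t : ℝ}
    (hs : s ∈ spectrum ℝ ρ) (ht : t ∈ spectrum ℝ ρ) : (s - t) * (d ^ 2 - 1) ≤ d := by
  rw [hρ.spectrum_real_eq_range_eigenvalues] at hs ht
  obtain ⟨i, rfl⟩ := hs
  obtain ⟨j, rfl⟩ := ht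
  rcases eq_or_ne i j with rfl | hij
  · simp
  have hdot (k l : Fin d) : star (hρ.eigenvectorBasis k).ofLp ⬝ᵥ (hρ.eigenvectorBasis l).ofLp =
      if k = l then 1 else 0 := by
    rw [dotProduct_comm, ← EuclideanSpace.inner_eq_star_dotProduct]
    exact orthonormal_iff_ite.1 hρ.eigenvectorBasis.orthonormal k l
  have h := star_dotProduct_mulVec_sub_mul_le hS hact (by simp [hdot i i]) (by simp [hdot j j])
    ((hdot i j).trans (if_neg hij))
  simp only [hρ.mulVec_eigenvectorBasis, dotProduct_smul, hdot, if_true, Complex.real_smul] at h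
  norm_cast at h
  simpa using h

/-- The supermap `|1⟩⟩⟨⟨1|_{IF} ⊗ (ρ − (M − 1/d) 1)_O + 1_{IF} ⊗ (M 1 − ρ)_O / d`, which is the
candidate superchannel for the transposition on `ρ` when `M` is the largest eigenvalue of `ρ`. -/
def transposingSupermap (ρ : Matrix (Fin d) (Fin d) ℂ) (M : ℝ) :
    Matrix ((Fin d × Fin d) × Fin d) ((Fin d × Fin d) × Fin d) ℂ :=
  insertOut (choiProj 1) (ρ - ((M : ℂ) - (d : ℂ)⁻¹) • 1) +
    insertOut 1 ((d : ℂ)⁻¹ • ((M : ℂ) • 1 - ρ))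

theorem act_transposingSupermap [NeZero d] (htr : ρ.trace = 1) (M : ℝ)
    {U : Matrix (Fin d) (Fin d) ℂ} (hU : U ∈ unitaryGroup (Fin d) ℂ) :
    act (transposingSupermap ρ M) U = Uᵀ * ρ * mconj U := by
  have hU' : Uᵀ * mconj U = 1 := mem_unitaryGroup_iff.1 (transpose_mem_unitaryGroup_iff.2 hU)
  have htrace : ((d : ℂ)⁻¹ • ((M : ℂ) • 1 - ρ)).trace = (M : ℂ) - (d : ℂ)⁻¹ := by
    rw [trace_smul, trace_sub, trace_smul, trace_one, Fintype.card_fin, htr, smul_eq_mul,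
      smul_eq_mul]
    field_simp [NeZero.ne (d : ℂ)]
  rw [transposingSupermap, act_add, act_insertOut_choiProj_one, act_insertOut_one _ hU, htrace,
    Matrix.mul_sub, Matrix.sub_mul, Matrix.mul_smul, Matrix.smul_mul, Matrix.mul_one, hU',
    sub_add_cancel]

theorem posSemidef_transposingSupermap [NeZero d] {m M : ℝ}
    (hm : (ρ - (m : ℂ) • 1).PosSemidef) (hM : ((M : ℂ) • 1 - ρ).PosSemidef)
    (hmM : (M - m) * (d ^ 2 - 1) ≤ d) : (transposingSupermap ρ M).PosSemidef := by
  have hd₀ : (d : ℂ) ≠ 0 := NeZero.ne _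
  have hd₁ : (0 : ℂ) ≤ d ^ 2 - 1 := by
    rw [sub_nonneg]
    exact_mod_cast one_le_pow₀ (NeZero.one_le (n := d))
  have hgap : (0 : ℂ) ≤ d - (M - m) * (d ^ 2 - 1) := by exact_mod_cast sub_nonneg.2 hmM
  have hinv : (0 : ℂ) ≤ (d ^ 2 : ℂ)⁻¹ := by positivity
  have hE : ((d : ℂ) • 1 - choiProj (1 : Matrix (Fin d) (Fin d) ℂ)).PosSemidef := by
    simpa only [trace_choiProj_one] using
      posSemidef_trace_smul_one_sub (posSemidef_choiProj (1 : Matrix (Fin d) (Fin d) ℂ))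
  -- Split `IF` along the range of `|1⟩⟩⟨⟨1|`, which is `d` times a projection.
  have hsplit : transposingSupermap ρ M =
      insertOut ((d : ℂ) • 1 - choiProj 1) ((d ^ 2 : ℂ)⁻¹ • ((M : ℂ) • 1 - ρ)) +
        insertOut (choiProj 1) ((d ^ 2 : ℂ)⁻¹ •
          ((d ^ 2 - 1 : ℂ) • (ρ - (m : ℂ) • 1) + (d - (M - m) * (d ^ 2 - 1) : ℂ) • 1)) := by
    ext
    simp only [transposingSupermap, insertOut, Matrix.add_apply, Matrix.sub_apply,
      Matrix.smul_apply, submatrix_apply, kroneckerMap_apply, smul_eq_mul]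
    field
  rw [hsplit]
  exact (posSemidef_insertOut hE (hM.smul hinv)).add (posSemidef_insertOut (posSemidef_choiProj 1)
    (((hm.smul hd₁).add (PosSemidef.one.smul hgap)).smul hinv))

theorem ptrRight_transposingSupermap [NeZero d] (M : ℝ) :
    ptrRight (transposingSupermap ρ M) = ((d : ℂ)⁻¹ • 1) ⊗ₖ 1 := by
  have hone : ptrRight (1 : Matrix (Fin d × Fin d) (Fin d × Fin d) ℂ) = (d : ℂ) • 1 := by
    rw [← one_kronecker_one, ptrRight_kronecker, trace_one, Fintype.card_fin]
  rw [transposingSupermap, ptrRight_add, ptrRight_insertOut, ptrRight_insertOut,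
    ptrRight_choiProj_one, hone, smul_kronecker, ← kronecker_smul, smul_smul,
    mul_inv_cancel₀ (NeZero.ne _), one_smul, ← kronecker_add, smul_kronecker, ← kronecker_smul]
  congr 1
  module

theorem isSuperchannel_transposingSupermap [NeZero d] {m M : ℝ}
    (hm : (ρ - (m : ℂ) • 1).PosSemidef) (hM : ((M : ℂ) • 1 - ρ).PosSemidef)
    (hmM : (M - m) * (d ^ 2 - 1) ≤ d) : IsSuperchannel (transposingSupermap ρ M) :=
  ⟨posSemidef_transposingSupermap hm hM hmM, (d : ℂ)⁻¹ • 1, PosSemidef.one.smul (by positivity),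
    by simp, ptrRight_transposingSupermap M⟩

end Transposition

section IsotropicNoise

theorem spectrum_eq_of_isIdempotentElem {𝕜 A : Type*} [Field 𝕜] [Ring A] [Algebra 𝕜 A] {p : A}
    (hp : IsIdempotentElem p) (h₀ : p ≠ 0) (h₁ : p ≠ 1) : spectrum 𝕜 p = {0, 1} := by
  refine (hp.spectrum_subset 𝕜).antisymm ?_
  rintro _ (rfl | rfl)
  · rw [spectrum.zero_mem_iff]
    exact fun h ↦ h₁ ((IsIdempotentElem.iff_eq_one_of_isUnit h).1 hp)
  · rw [spectrum.mem_iff, map_one]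
    exact fun h ↦ h₀ (sub_eq_self.1 ((IsIdempotentElem.iff_eq_one_of_isUnit h).1 hp.one_sub))

theorem spectrum_smul_add_smul_one {𝕜 A : Type*} [Field 𝕜] [Ring A] [Algebra 𝕜 A] {p : A}
    (hp : IsIdempotentElem p) (h₀ : p ≠ 0) (h₁ : p ≠ 1) (η c : 𝕜) :
    spectrum 𝕜 (η • p + c • 1) = {c, η + c} := by
  have : Nontrivial A := ⟨p, 0, h₀⟩
  have hspec : spectrum 𝕜 p = {0, 1} := spectrum_eq_of_isIdempotentElem hp h₀ h₁
  rw [← Algebra.algebraMap_eq_smul_one, ← spectrum.add_singleton_eq,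
    spectrum.smul_eq_smul _ _ (by simp [hspec]), hspec]
  simp [Set.smul_set_insert, Set.add_singleton, Set.image_pair]

variable {d : ℕ} {ψ : Fin d → ℂ}

theorem isHermitian_smul_outer_add {n : Type*} [DecidableEq n] (ψ : n → ℂ) (η c : ℝ) :
    ((η : ℂ) • outer ψ + (c : ℂ) • 1).IsHermitian := by
  have hψ : (outer ψ).IsHermitian := by
    rw [IsHermitian, outer, conjTranspose_vecMulVec, star_star]
  exact (hψ.smul (Complex.conj_ofReal η)).add (isHermitian_one.smul (Complex.conj_ofReal c))

theorem trace_outer {n : Type*} [Fintype n] {ψ : n → ℂ} (hψ : star ψ ⬝ᵥ ψ = 1) :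
    (outer ψ).trace = 1 := by
  rw [outer, trace_vecMulVec, dotProduct_comm, hψ]

theorem trace_smul_outer_add (hd : d ≠ 0) (hψ : star ψ ⬝ᵥ ψ = 1) (η : ℝ) :
    ((η : ℂ) • outer ψ + (((1 - η) / d : ℝ) : ℂ) • 1).trace = 1 := by
  rw [trace_add, trace_smul, trace_smul, trace_outer hψ, trace_one, Fintype.card_fin]
  push_cast
  rw [smul_eq_mul, mul_one, smul_eq_mul, div_mul_cancel₀ _ (Nat.cast_ne_zero.2 hd),
    add_sub_cancel]

theorem spectrum_smul_outer_add (hd : 2 ≤ d) (hψ : star ψ ⬝ᵥ ψ = 1) (η c : ℝ) :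
    spectrum ℝ ((η : ℂ) • outer ψ + (c : ℂ) • 1) = {c, η + c} := by
  have htrace := trace_outer hψ
  rw [Complex.coe_smul, Complex.coe_smul]
  refine spectrum_smul_add_smul_one (isStarProjection_vecMulVec_star hψ).isIdempotentElem ?_ ?_ η c
  · intro h
    simp [outer, h] at htrace
  · intro h
    simp [outer, h] at htrace
    omega

end IsotropicNoise

theorem mixed_state_deterministic_exact_transposition_general {d : ℕ}
    {ρ : Matrix (Fin d) (Fin d) ℂ} (hρ : ρ.IsHermitian) (htr : ρ.trace = 1) :
    (∃ S : Matrix ((Fin d × Fin d) × Fin d) ((Fin d × Fin d) × Fin d) ℂ,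
        IsSuperchannel S ∧
        ∀ U : Matrix (Fin d) (Fin d) ℂ, U ∈ specialUnitaryGroup (Fin d) ℂ →
          act S U = Uᵀ * ρ * mconj U) ↔
      ∀ s ∈ spectrum ℝ ρ, ∀ t ∈ spectrum ℝ ρ, (s - t) * (d ^ 2 - 1) ≤ d := by
  have hd : NeZero d := ⟨by rintro rfl; simp [trace] at htr⟩
  constructor
  · rintro ⟨S, hS, hact⟩ s hs t ht
    refine sub_mul_le_of_mem_spectrum hρ hS (fun U hU ↦ ?_) hs ht
    rw [← act_insertOut_choiProj_one, ← sub_eq_zero, ← act_sub]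
    refine act_eq_zero_of_forall_mem_specialUnitaryGroup (fun V hV ↦ ?_) hU
    rw [act_sub, act_insertOut_choiProj_one, hact V hV, sub_self]
  · intro h
    obtain ⟨i, hi⟩ := Finite.exists_max hρ.eigenvalues
    obtain ⟨j, hj⟩ := Finite.exists_min hρ.eigenvalues
    refine ⟨transposingSupermap ρ (hρ.eigenvalues i), isSuperchannel_transposingSupermap
      (m := hρ.eigenvalues j) ?_ ?_ ?_, fun U hU ↦ act_transposingSupermap htr _ hU.1⟩
    · rw [posSemidef_sub_smul_one_iff hρ, hρ.spectrum_real_eq_range_eigenvalues]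
      exact Set.forall_mem_range.2 hj
    · rw [posSemidef_smul_one_sub_iff hρ, hρ.spectrum_real_eq_range_eigenvalues]
      exact Set.forall_mem_range.2 hi
    · exact h _ (hρ.eigenvalues_mem_spectrum_real i) _ (hρ.eigenvalues_mem_spectrum_real j)

/-- **Deterministic exact unitary transposition on a known mixed state.** With `ρ = η|ψ⟩⟨ψ| + ((1−η)/d)·1`, a single-call deterministic superchannel implementing `U ↦ Uᵀ ρ U̅` for all `U ∈ SU(d)` exists iff `η ≤ d/(d²−1)`. -/
theorem mixed_state_deterministic_exact_transposition
    (d : ℕ) (hd : 2 ≤ d) (ψ : Fin d → ℂ) (hψ : star ψ ⬝ᵥ ψ = 1)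
    (η : ℝ) (hη : η ∈ Set.Icc (0 : ℝ) 1) :
    (∃ S : Matrix ((Fin d × Fin d) × Fin d) ((Fin d × Fin d) × Fin d) ℂ,
        IsSuperchannel S ∧
        ∀ U : Matrix (Fin d) (Fin d) ℂ, U ∈ Matrix.specialUnitaryGroup (Fin d) ℂ →
          act S U =
            Uᵀ * ((η : ℂ) • outer ψ + (((1 - η) / d : ℝ) : ℂ) • (1 : Matrix (Fin d) (Fin d) ℂ)) * mconj U) ↔
      η ≤ (d : ℝ) / ((d : ℝ) ^ 2 - 1) := by
  have hpos : (0 : ℝ) < d ^ 2 - 1 := by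
    rw [sub_pos]
    exact_mod_cast Nat.one_lt_pow two_ne_zero hd
  have hneg : -(η * (d ^ 2 - 1)) ≤ d :=
    (neg_nonpos.2 (mul_nonneg hη.1 hpos.le)).trans d.cast_nonneg
  rw [mixed_state_deterministic_exact_transposition_general (isHermitian_smul_outer_add ψ _ _)
    (trace_smul_outer_add (by omega) hψ η), spectrum_smul_outer_add hd hψ, le_div_iff₀ hpos]
  simp [hneg]
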